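/- arXiv:1710.03815 — 2 statements merged into one kernel-verified Lean document; each statement's English description precedes it below -/
import Mathlib

section
/- (Counting matroidal Erdős–Stone theorem.) For every nonempty matroid N and every δ > 0, there exist a positive integer n₀ and a real α > 0 such that every matroid M ⊆ 𝔽₂ⁿ \ {0} with r(M) ≥ n₀ and |M| ≥ (1 − 2^{1−χ(N)} + δ)·2^{r(M)} has at least α·(2^{r(M)})^{r(N)} distinct N-restrictions. -/
open scoped Classical

/-- `M` has an `N`-restriction: some injective linear image of `N` lies inside `M`. -/
def HasRestriction {α β : Type*} [AddCommMonoid α] [AddCommMonoid β]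
    [Module (ZMod 2) α] [Module (ZMod 2) β] (N : Set α) (M : Set β) : Prop :=
  ∃ ψ : α →ₗ[ZMod 2] β, Function.Injective ψ ∧ ψ '' N ⊆ M

/-- The set of distinct `N`-restrictions of `M` (as subsets of `M`). -/
def restrictionSet {α β : Type*} [AddCommMonoid α] [AddCommMonoid β]
    [Module (ZMod 2) α] [Module (ZMod 2) β] (N : Set α) (M : Set β) : Set (Set β) :=
  {S | S ⊆ M ∧ ∃ ψ : α →ₗ[ZMod 2] β, Function.Injective ψ ∧ S = ψ '' N}

/-- The Turán number for a single excluded matroid `N`. -/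
noncomputable def exNum {α : Type*} [AddCommMonoid α] [Module (ZMod 2) α] (N : Set α) (n : ℕ) : ℕ :=
  sSup {m | ∃ M : Set (Fin n → ZMod 2), 0 ∉ M ∧ ¬ HasRestriction N M ∧ M.ncard = m}

/-- The Turán number for a family of excluded matroids. -/
noncomputable def exNumFam (𝒩 : Set (Σ k : ℕ, Set (Fin k → ZMod 2))) (n : ℕ) : ℕ :=
  sSup {m | ∃ M : Set (Fin n → ZMod 2), 0 ∉ M ∧
    (∀ N ∈ 𝒩, ¬ HasRestriction N.2 M) ∧ M.ncard = m}

/-- The critical number of `M ⊆ 𝔽₂ⁿ`. -/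
noncomputable def critNum {n : ℕ} (M : Set (Fin n → ZMod 2)) : ℕ :=
  sInf {c | ∃ φ : (Fin n → ZMod 2) →ₗ[ZMod 2] (Fin c → ZMod 2), ∀ x ∈ M, φ x ≠ 0}

/-- The rank of `M`: dimension of its span. -/
noncomputable def rankM {n : ℕ} (M : Set (Fin n → ZMod 2)) : ℕ :=
  Module.finrank (ZMod 2) (Submodule.span (ZMod 2) M)

/-- `M` is a copy of `N^{n,t}`. -/
def IsCopyNnt {d : ℕ} (N : Set (Fin d → ZMod 2)) (n t : ℕ)
    (M : Set (Fin n → ZMod 2)) : Prop :=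
  ∃ F : Submodule (ZMod 2) (Fin n → ZMod 2), Module.finrank (ZMod 2) F = n - t ∧
    ∃ θ : (Fin d → ZMod 2) →ₗ[ZMod 2] (Fin n → ZMod 2),
      Function.Injective θ ∧ (∀ x, θ x ∈ F) ∧ M = θ '' N ∪ {x | x ∉ F}

/-- The decomposition family `𝒟(𝒩)`. -/
def decompFam (𝒩 : Set (Σ k : ℕ, Set (Fin k → ZMod 2))) (k : ℕ) :
    Set (Σ k : ℕ, Set (Fin k → ZMod 2)) :=
  {D | 0 ∉ D.2 ∧
    (∃ N ∈ 𝒩, ∃ M : Set (Fin N.1 → ZMod 2), IsCopyNnt D.2 N.1 k M ∧ HasRestriction N.2 M) ∧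
    ∀ D' : Σ k : ℕ, Set (Fin k → ZMod 2), 0 ∉ D'.2 →
      (∃ N ∈ 𝒩, ∃ M : Set (Fin N.1 → ZMod 2), IsCopyNnt D'.2 N.1 k M ∧ HasRestriction N.2 M) →
      HasRestriction D'.2 D.2 → HasRestriction D.2 D'.2}

/-- The cycle matroid of a simple graph. -/
def cycleMatroid {V : Type*} [DecidableEq V] (G : SimpleGraph V) : Set (V → ZMod 2) :=
  {x | ∃ u v, G.Adj u v ∧ x = Pi.single u 1 + Pi.single v 1}

/-!
Write `c` for the critical number of `N`, witnessed by a linear map `φ` into `𝔽₂ᶜ` that does not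
vanish on `N`, and measure `M` by its density in the space `V` it spans.

A set of positive density contains a translate of a large subspace: by Cauchy–Schwarz some nonzero
`b` in any large subspace is a popular difference, and one recurses on `M ∩ (M - b)`. If `M` has
density above `1 - 2^(1 - c)`, such a translate `x + U ⊆ M` exists, and `M ∩ (M - x)` has density
above `1 - 2^(1 - (c - 1))`. By induction on `c` there are `x₁, …, x_c` and a large subspace `U`
such that every coset `∑ aᵢ xᵢ + U` with `a ≠ 0` lies in `M`. Adding an injection into `U` to
`e ↦ ∑ (φ e)ᵢ xᵢ` then yields an injective linear map sending `N` into `M`.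

To count, pull `M` back along a random linear map `Z → V` from a fixed large space `Z`. The pullback
has the density of `M` on average, up to the point `0`, so it is dense, and hence has an
`N`-restriction, with probability bounded below. As there are boundedly many linear maps into `Z`, a
positive proportion of all linear maps into `V` send `N` into `M`. Almost all of these are
injective, and each `N`-restriction is the image of `N` under boundedly many linear maps on the span
of `N`.
-/

open Finset Module
open scoped BigOperators

section Density

variable {α ι : Type*} [Fintype α]

theorem sq_expect_dens_le_expect_dens_inter (I : Finset ι) (A : ι → Finset α) :
    (𝔼 i ∈ I, (dens (A i) : ℝ)) ^ 2 ≤ 𝔼 i ∈ I, 𝔼 j ∈ I, (dens (A i ∩ A j) : ℝ) := by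
  let indicator (i : ι) : α → ℝ := Set.indicator (A i) 1
  calc (𝔼 i ∈ I, (dens (A i) : ℝ)) ^ 2
      = (𝔼 v, (𝔼 i ∈ I, indicator i v) * 1) ^ 2 := by
        simp only [mul_one, expect_comm univ I, indicator, expect_indicator_one]
    _ ≤ (𝔼 v, (𝔼 i ∈ I, indicator i v) ^ 2) * 𝔼 _v : α, (1 : ℝ) ^ 2 :=
        expect_mul_sq_le_sq_mul_sq ..
    _ ≤ 𝔼 v, (𝔼 i ∈ I, indicator i v) ^ 2 := by
        refine mul_le_of_le_one_right (expect_nonneg fun v _ ↦ sq_nonneg _) ?_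
        cases isEmpty_or_nonempty α <;> simp
    _ = 𝔼 i ∈ I, 𝔼 j ∈ I, 𝔼 v, indicator i v * indicator j v := by
        simp only [sq, expect_mul_expect]
        rw [expect_comm]
        exact expect_congr rfl fun i _ ↦ expect_comm ..
    _ = 𝔼 i ∈ I, 𝔼 j ∈ I, (dens (A i ∩ A j) : ℝ) := by
        simp only [← expect_indicator_one, coe_inter, Set.inter_indicator_one, Pi.mul_apply,
          indicator]

theorem exists_ne_le_dens_inter {δ : ℝ} (hδ : 0 < δ) {I : Finset ι} {A : ι → Finset α}
    (hA : ∀ i ∈ I, δ ≤ dens (A i)) (hI : 2 / δ ^ 2 < #I) :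
    ∃ i ∈ I, ∃ j ∈ I, i ≠ j ∧ δ ^ 2 / 2 ≤ dens (A i ∩ A j) := by
  have hI0 : (0 : ℝ) < #I := lt_trans (by positivity) hI
  have hIne : I.Nonempty := card_pos.mp (by exact_mod_cast hI0)
  by_contra! hsmall
  have hbound : ∀ i ∈ I, ∀ j ∈ I,
      (dens (A i ∩ A j) : ℝ) ≤ (if i = j then 1 else 0) + δ ^ 2 / 2 := by
    intro i hi j hj
    split_ifs with hij
    · have : (dens (A i ∩ A j) : ℝ) ≤ 1 := by exact_mod_cast dens_le_one
      linarith [sq_nonneg δ]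
    · linarith [hsmall i hi j hj hij]
  have hdiag : ((#I : ℝ))⁻¹ < δ ^ 2 / 2 := by
    rw [inv_lt_comm₀ hI0 (by positivity), inv_div]
    exact hI
  refine lt_irrefl (δ ^ 2) ?_
  calc δ ^ 2 ≤ (𝔼 i ∈ I, (dens (A i) : ℝ)) ^ 2 := by gcongr; exact le_expect hIne hA
    _ ≤ 𝔼 i ∈ I, 𝔼 j ∈ I, (dens (A i ∩ A j) : ℝ) := sq_expect_dens_le_expect_dens_inter I A
    _ ≤ 𝔼 i ∈ I, 𝔼 j ∈ I, ((if i = j then 1 else 0) + δ ^ 2 / 2) :=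
        expect_le_expect fun i hi ↦ expect_le_expect fun j hj ↦ hbound i hi j hj
    _ = 𝔼 i ∈ I, ((#I : ℝ)⁻¹ + δ ^ 2 / 2) := by
        refine expect_congr rfl fun i hi ↦ ?_
        rw [expect_add_distrib, expect_const hIne, expect_ite_eq, if_pos hi]
        simp [NNRat.smul_def]
    _ = (#I : ℝ)⁻¹ + δ ^ 2 / 2 := expect_const hIne _
    _ < δ ^ 2 := by linarith

theorem dens_le_card_mul_of_cover {S : Finset α} {I : Finset ι} {A : ι → Finset α} {p : ℝ}
    (hS : ∀ a ∈ S, ∃ i ∈ I, a ∈ A i) (hA : ∀ i ∈ I, (dens (A i) : ℝ) ≤ p) :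
    (dens S : ℝ) ≤ #I * p := by
  have hcover : dens S ≤ ∑ i ∈ I, dens (A i) :=
    (dens_le_dens fun a ha ↦ mem_biUnion.mpr (hS a ha)).trans dens_biUnion_le
  calc (dens S : ℝ) ≤ ∑ i ∈ I, (dens (A i) : ℝ) := by exact_mod_cast hcover
    _ ≤ #I * p := by simpa using sum_le_card_nsmul I _ p hA

theorem expect_le_dens_filter_le_add {f : α → ℝ} (hf : ∀ x, f x ≤ 1) {a : ℝ} (ha : 0 ≤ a) :
    𝔼 x, f x ≤ dens {x | a ≤ f x} + a := by
  calc 𝔼 x, f x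
      ≤ 𝔼 x, (Set.indicator (({x | a ≤ f x} : Finset α) : Set α) 1 x + a) := by
        refine expect_le_expect fun x _ ↦ ?_
        by_cases hx : a ≤ f x
        · simpa [Set.indicator, hx] using le_add_of_le_of_nonneg (hf x) ha
        · simpa [Set.indicator, hx] using (not_le.mp hx).le
    _ ≤ dens {x | a ≤ f x} + a := by
        rw [expect_add_distrib, expect_indicator_one]
        gcongr
        cases isEmpty_or_nonempty α <;> simp [ha]

theorem expect_dens_filter_comm {β : Type*} [Fintype β] (r : α → β → Prop)
    [∀ x y, Decidable (r x y)] :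
    𝔼 x, (dens {y | r x y} : ℝ) = 𝔼 y, (dens {x | r x y} : ℝ) := by
  simp only [← expect_indicator_one, Set.indicator, coe_filter, mem_univ, true_and,
    Set.mem_ofPred_eq]
  exact expect_comm ..

theorem dens_filter_apply_mem_of_surjective {G H F : Type*} [AddGroup G] [AddGroup H] [Fintype G]
    [Fintype H] [DecidableEq H] [FunLike F G H] [AddMonoidHomClass F G H] {f : F}
    (hf : Function.Surjective f) (T : Finset H) : dens {g | f g ∈ T} = dens T := by
  have card_preimage (T : Finset H) : #{g | f g ∈ T} = #T * #{g | f g = 0} := by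
    rw [← sum_card_fiberwise_eq_card_filter, sum_const_nat fun h _ ↦
      AddMonoidHom.card_fiber_eq_of_mem_range f (hf h) (hf 0)]
  have hG : Fintype.card G = Fintype.card H * #{g | f g = 0} := by
    simpa using card_preimage univ
  have hker : (#{g | f g = 0} : ℚ≥0) ≠ 0 := by
    have : Fintype.card G ≠ 0 := Fintype.card_ne_zero
    exact_mod_cast right_ne_zero_of_mul (hG ▸ this)
  rw [dens, dens, card_preimage, hG, Nat.cast_mul, Nat.cast_mul, mul_div_mul_right _ _ hker]

section Translate

variable {V : Type*} [AddCommGroup V] [Fintype V] (M : Finset V)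

theorem dens_filter_add_right_mem (b : V) : dens {v | v + b ∈ M} = dens M := by
  rw [← dens_map_equiv (Equiv.addRight b)]
  congr 1
  ext v
  simp

theorem two_mul_dens_sub_one_le_dens_filter_add_right_mem (b : V) :
    2 * (dens M : ℝ) - 1 ≤ dens {v ∈ M | v + b ∈ M} := by
  have hinter : ({v ∈ M | v + b ∈ M} : Finset V) = M ∩ ({v | v + b ∈ M} : Finset V) := by
    ext; simp
  have hincl : (dens (M ∪ ({v | v + b ∈ M} : Finset V)) + dens {v ∈ M | v + b ∈ M} : ℝ) =
      2 * dens M := by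
    rw [hinter, two_mul]
    nth_rw 2 [← dens_filter_add_right_mem M b]
    exact_mod_cast dens_union_add_dens_inter _ _
  have hunion : (dens (M ∪ ({v | v + b ∈ M} : Finset V)) : ℝ) ≤ 1 := by
    exact_mod_cast dens_le_one
  linarith

theorem exists_mem_ne_zero_le_dens_filter_add_right_mem {δ : ℝ} (hδ : 0 < δ) {M : Finset V}
    (hM : δ ≤ dens M) {U : AddSubgroup V} (hU : 2 / δ ^ 2 < Nat.card U) :
    ∃ b ∈ U, b ≠ 0 ∧ δ ^ 2 / 2 ≤ dens {v ∈ M | v + b ∈ M} := by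
  obtain ⟨u, hu, u', hu', hne, hdens⟩ :=
    exists_ne_le_dens_inter hδ (I := {u | u ∈ U}) (A := fun u ↦ {v | v + u ∈ M})
      (fun u _ ↦ by rwa [dens_filter_add_right_mem])
      (by rwa [← Fintype.card_subtype, ← Nat.card_eq_fintype_card])
  rw [mem_filter_univ] at hu hu'
  refine ⟨u' - u, U.sub_mem hu' hu, sub_ne_zero.mpr hne.symm, ?_⟩
  convert hdens using 2
  rw [← dens_filter_add_right_mem _ u]
  congr 1
  ext v
  simp [add_assoc]

end Translate

end Density

universe u

theorem exists_translate_subset_of_le_dens (m : ℕ) {δ : ℝ} (hδ : 0 < δ) :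
    ∃ D : ℕ, ∀ (V : Type u) [AddCommGroup V] [Module (ZMod 2) V] [Fintype V]
      (U : Submodule (ZMod 2) V) (M : Finset V), D ≤ finrank (ZMod 2) U → δ ≤ dens M →
      ∃ x, ∃ U' ≤ U, m ≤ finrank (ZMod 2) U' ∧ ∀ u ∈ U', x + u ∈ M := by
  induction m generalizing δ with
  | zero =>
    refine ⟨0, fun V _ _ _ U M _ hM ↦ ?_⟩
    have hM0 : 0 < (dens M : ℝ) := hδ.trans_le hM
    obtain ⟨x, hx⟩ := dens_pos.mp (by exact_mod_cast hM0)
    exact ⟨x, ⊥, bot_le, Nat.zero_le _, by simpa using hx⟩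
  | succ m ih =>
    obtain ⟨D₁, hD₁⟩ := ih (δ := δ ^ 2 / 2) (by positivity)
    obtain ⟨D₀, hD₀⟩ := pow_unbounded_of_one_lt (2 / δ ^ 2) (one_lt_two (α := ℝ))
    refine ⟨max D₀ (D₁ + 1), fun V _ _ _ U M hU hM ↦ ?_⟩
    have hcard : 2 / δ ^ 2 < Nat.card U.toAddSubgroup := by
      change _ < (Nat.card U : ℝ)
      rw [Module.natCard_eq_pow_finrank (K := ZMod 2), Nat.card_zmod, Nat.cast_pow, Nat.cast_two]
      exact hD₀.trans_le (pow_le_pow_right₀ one_le_two (le_of_max_le_left hU))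
    obtain ⟨b, hb, hb0, hMb⟩ := exists_mem_ne_zero_le_dens_filter_add_right_mem hδ hM hcard
    have hspan : finrank (ZMod 2) (ZMod 2 ∙ b) = 1 := finrank_span_singleton hb0
    obtain ⟨C, hdisj, hsup⟩ := IsModularLattice.exists_disjoint_and_sup_eq
      ((Submodule.span_singleton_le_iff_mem b U).mpr hb)
    have hC : D₁ ≤ finrank (ZMod 2) C := by
      have := Submodule.finrank_sup_add_finrank_inf_eq (ZMod 2 ∙ b) C
      rw [hdisj.eq_bot, finrank_bot, hspan, hsup] at this
      lia
    obtain ⟨x, U', hU'C, hU', hx⟩ := hD₁ V C _ hC hMb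
    refine ⟨x, (ZMod 2 ∙ b) ⊔ U', ?_, ?_, fun w hw ↦ ?_⟩
    · exact hsup ▸ sup_le_sup_left hU'C _
    · have := Submodule.finrank_sup_add_finrank_inf_eq (ZMod 2 ∙ b) U'
      rw [(hdisj.mono_right hU'C).eq_bot, finrank_bot, hspan] at this
      lia
    · obtain ⟨_, hsb, u, hu, rfl⟩ := Submodule.mem_sup.mp hw
      obtain ⟨s, rfl⟩ := Submodule.mem_span_singleton.mp hsb
      obtain ⟨hxu, hxub⟩ := mem_filter.mp (hx u hu)
      obtain rfl | rfl : s = 0 ∨ s = 1 := or_iff_not_imp_left.mpr (Fin.eq_one_of_ne_zero s)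
      · simpa using hxu
      · simpa [add_assoc, add_comm u b] using hxub

theorem exists_cosets_subset_of_le_dens (c m : ℕ) {δ : ℝ} (hδ : 0 < δ) :
    ∃ D : ℕ, ∀ (V : Type u) [AddCommGroup V] [Module (ZMod 2) V] [Fintype V]
      (U : Submodule (ZMod 2) V) (M : Finset V), D ≤ finrank (ZMod 2) U →
      1 - 2 ^ (1 - (c : ℤ)) + δ ≤ dens M →
      ∃ x : Fin c → V, ∃ U' ≤ U, m ≤ finrank (ZMod 2) U' ∧
        ∀ a : Fin c → ZMod 2, a ≠ 0 → ∀ u ∈ U', ∑ i, a i • x i + u ∈ M := by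
  induction c generalizing δ with
  | zero =>
    exact ⟨m, fun V _ _ _ U M hU _ ↦
      ⟨0, U, le_rfl, hU, fun a ha ↦ absurd (Subsingleton.elim a 0) ha⟩⟩
  | succ c ih =>
    obtain ⟨D₁, hD₁⟩ := ih (δ := 2 * δ) (by positivity)
    obtain ⟨D, hD⟩ := exists_translate_subset_of_le_dens D₁ hδ
    refine ⟨D, fun V _ _ _ U M hU hM ↦ ?_⟩
    -- Passing from `M` to `M ∩ (M - x₀)` doubles both the threshold's distance to `1` and `δ`.
    have hpow : (2 : ℝ) ^ (1 - (c : ℤ)) = 2 * 2 ^ (1 - ((c + 1 : ℕ) : ℤ)) := by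
      rw [← zpow_one_add₀ two_ne_zero]
      congr 1
      push_cast
      ring
    have hpow_le : (2 : ℝ) ^ (1 - ((c + 1 : ℕ) : ℤ)) ≤ 1 :=
      zpow_le_one_of_nonpos₀ one_le_two (by lia)
    obtain ⟨x₀, U₁, hU₁U, hU₁, hx₀⟩ := hD V U M hU (by linarith)
    have hdens := two_mul_dens_sub_one_le_dens_filter_add_right_mem M x₀
    obtain ⟨x, U', hU'U₁, hU', hx⟩ :=
      hD₁ V U₁ {v ∈ M | v + x₀ ∈ M} hU₁ (by rw [hpow]; linarith)
    refine ⟨Fin.cons x₀ x, U', hU'U₁.trans hU₁U, hU', ?_⟩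
    rw [Fin.forall_fin_succ_pi]
    intro s a hsa u hu
    simp only [Fin.sum_univ_succ, Fin.cons_zero, Fin.cons_succ]
    by_cases ha : a = 0
    · obtain rfl : s = 1 := by
        refine Fin.eq_one_of_ne_zero s fun hs ↦ hsa ?_
        rw [hs, ha]
        exact Matrix.cons_zero_zero
      simpa [ha] using hx₀ u (hU'U₁ hu)
    · obtain ⟨hxu, hxux₀⟩ := mem_filter.mp (hx a ha u hu)
      obtain rfl | rfl : s = 0 ∨ s = 1 := or_iff_not_imp_left.mpr (Fin.eq_one_of_ne_zero s)
      · simpa using hxu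
      · simpa [add_assoc, add_comm x₀] using hxux₀

theorem exists_hasRestriction_of_le_dens {E : Type*} [AddCommGroup E] [Module (ZMod 2) E]
    [Module.Finite (ZMod 2) E] {c : ℕ} {N : Set E} {φ : E →ₗ[ZMod 2] (Fin c → ZMod 2)}
    (hφ : ∀ x ∈ N, φ x ≠ 0) {δ : ℝ} (hδ : 0 < δ) :
    ∃ D : ℕ, ∀ (V : Type u) [AddCommGroup V] [Module (ZMod 2) V] [Fintype V] (M : Finset V),
      0 ∉ M → D ≤ finrank (ZMod 2) V → 1 - 2 ^ (1 - (c : ℤ)) + δ ≤ dens M →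
      HasRestriction N (M : Set V) := by
  obtain ⟨D, hD⟩ := exists_cosets_subset_of_le_dens c (finrank (ZMod 2) E) hδ
  refine ⟨D, fun V _ _ _ M h0 hV hM ↦ ?_⟩
  obtain ⟨x, U, -, hU, hx⟩ := hD V ⊤ M (by simpa using hV) hM
  obtain ⟨j, hj⟩ := finrank_le_iff_exists_linearMap.mp hU
  let ψ := Fintype.linearCombination (ZMod 2) x ∘ₗ φ + U.subtype ∘ₗ j
  have hψ_mem (e : E) (he : φ e ≠ 0) : ψ e ∈ M := hx (φ e) he (j e) (j e).2
  refine ⟨ψ, (injective_iff_map_eq_zero ψ).mpr fun e he ↦ ?_, ?_⟩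
  · by_cases hφe : φ e = 0
    · have hje : (j e : V) = 0 := by simpa [ψ, hφe] using he
      exact (map_eq_zero_iff j hj).mp (by exact_mod_cast hje)
    · exact absurd (he ▸ hψ_mem e hφe) h0
  · rintro _ ⟨e, he, rfl⟩
    exact hψ_mem e (hφ e he)

section RandomLinearMap

variable {K E Z V W : Type*} [Field K] [AddCommGroup E] [Module K E] [AddCommGroup Z] [Module K Z]
  [AddCommGroup V] [Module K V] [AddCommGroup W] [Module K W]
  [Fintype E] [Fintype Z] [Fintype V] [Fintype W]

noncomputable instance linearMapFintype : Fintype (E →ₗ[K] V) := DFunLike.fintype _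

theorem card_linearMap : Fintype.card (E →ₗ[K] V) = Fintype.card V ^ finrank K E := by
  rw [Fintype.card_congr ((finBasis K E).constr K (M' := V)).toEquiv.symm]
  simp

theorem dens_filter_comp_mem {j : W →ₗ[K] E} (hj : Function.Injective j)
    (T : Finset (W →ₗ[K] V)) : dens {f : E →ₗ[K] V | f ∘ₗ j ∈ T} = dens T := by
  obtain ⟨p, hp⟩ := j.exists_leftInverse_of_injective (LinearMap.ker_eq_bot.mpr hj)
  have hsurj : Function.Surjective (LinearMap.lcomp K V j) := fun g ↦
    ⟨g ∘ₗ p, by rw [LinearMap.lcomp_apply', LinearMap.comp_assoc, hp, LinearMap.comp_id]⟩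
  exact dens_filter_apply_mem_of_surjective hsurj T

theorem dens_filter_apply_mem {x : E} (hx : x ≠ 0) (M : Finset V) :
    dens {f : E →ₗ[K] V | f x ∈ M} = dens M := by
  have hsurj : Function.Surjective (LinearMap.applyₗ x : (E →ₗ[K] V) →ₗ[K] V) := fun v ↦
    have ⟨f, _, hf⟩ := LinearMap.exists_extend_of_notMem (0 : (⊥ : Submodule K E) →ₗ[K] V)
      (by simpa using hx) v
    ⟨f, hf⟩
  exact dens_filter_apply_mem_of_surjective hsurj M

theorem dens_filter_not_injective_le :
    (dens {f : E →ₗ[K] V | ¬ Function.Injective f} : ℝ) ≤ Fintype.card E / Fintype.card V := by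
  calc (dens {f : E →ₗ[K] V | ¬ Function.Injective f} : ℝ)
      ≤ #(univ.erase (0 : E)) * (1 / Fintype.card V) := by
        refine dens_le_card_mul_of_cover (A := fun x ↦ {f | f x ∈ ({0} : Finset V)})
          (fun f hf ↦ ?_) fun x hx ↦ ?_
        · rw [mem_filter_univ, injective_iff_map_eq_zero] at hf
          push Not at hf
          obtain ⟨x, hfx, hx⟩ := hf
          exact ⟨x, mem_erase.mpr ⟨hx, mem_univ x⟩, by simpa using hfx⟩
        · rw [dens_filter_apply_mem (ne_of_mem_erase hx), dens_singleton]
          simp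
    _ ≤ Fintype.card E / Fintype.card V := by
        rw [mul_one_div]
        gcongr
        exact card_le_univ _

theorem dens_sub_le_expect_dens_filter_apply_mem (M : Finset V) :
    (dens M - 1 / Fintype.card Z : ℝ) ≤ 𝔼 L : Z →ₗ[K] V, (dens {z | L z ∈ M} : ℝ) := by
  calc (dens M - 1 / Fintype.card Z : ℝ)
      = 𝔼 z : Z, ((dens M : ℝ) - if z = 0 then 1 else 0) := by
        rw [expect_sub_distrib, expect_const univ_nonempty, expect_ite_eq', if_pos (mem_univ _)]
        simp [NNRat.smul_def]
    _ ≤ 𝔼 z : Z, (dens {L : Z →ₗ[K] V | L z ∈ M} : ℝ) := by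
        refine expect_le_expect fun z _ ↦ ?_
        split_ifs with hz
        · have : (dens M : ℝ) ≤ 1 := by exact_mod_cast dens_le_one
          exact (sub_nonpos.mpr this).trans (by positivity)
        · rw [dens_filter_apply_mem hz, sub_zero]
    _ = 𝔼 L : Z →ₗ[K] V, (dens {z | L z ∈ M} : ℝ) :=
        (expect_dens_filter_comm fun (L : Z →ₗ[K] V) (z : Z) ↦ L z ∈ M).symm

theorem dens_sub_le_dens_filter_le_dens_filter_apply_mem (M : Finset V) {a : ℝ} (ha : 0 ≤ a) :
    (dens M - 1 / Fintype.card Z - a : ℝ) ≤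
      dens {L : Z →ₗ[K] V | a ≤ (dens {z | L z ∈ M} : ℝ)} := by
  have hmarkov := expect_le_dens_filter_le_add
    (f := fun L : Z →ₗ[K] V ↦ (dens {z | L z ∈ M} : ℝ)) (fun L ↦ by exact_mod_cast dens_le_one) ha
  linarith [dens_sub_le_expect_dens_filter_apply_mem (K := K) (Z := Z) M]

theorem dens_le_card_mul_dens_of_forall_exists_comp_mem {𝓛 : Finset (Z →ₗ[K] V)}
    {𝓕 : Finset (E →ₗ[K] V)}
    (h : ∀ L ∈ 𝓛, ∃ ψ : E →ₗ[K] Z, Function.Injective ψ ∧ L ∘ₗ ψ ∈ 𝓕) :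
    (dens 𝓛 : ℝ) ≤ Fintype.card (E →ₗ[K] Z) * dens 𝓕 := by
  calc (dens 𝓛 : ℝ)
      ≤ #{ψ : E →ₗ[K] Z | Function.Injective ψ} * dens 𝓕 := by
        refine dens_le_card_mul_of_cover (A := fun ψ ↦ {L | L ∘ₗ ψ ∈ 𝓕})
          (fun L hL ↦ ?_) fun ψ hψ ↦ ?_
        · obtain ⟨ψ, hψ, hLψ⟩ := h L hL
          exact ⟨ψ, (mem_filter_univ _).mpr hψ, (mem_filter_univ _).mpr hLψ⟩
        · rw [dens_filter_comp_mem ((mem_filter_univ ψ).mp hψ)]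
    _ ≤ Fintype.card (E →ₗ[K] Z) * dens 𝓕 := by
        gcongr
        exact card_le_univ _

theorem card_filter_image_eq_le {N : Set W} (hN : Submodule.span K N = ⊤) (S : Set V) :
    #{g : W →ₗ[K] V | g '' N = S} ≤ N.ncard ^ N.ncard := by
  obtain hempty | ⟨g₀, hg₀⟩ := ({g : W →ₗ[K] V | g '' N = S} : Finset _).eq_empty_or_nonempty
  · simp [hempty]
  obtain rfl := (mem_filter_univ _).mp hg₀
  calc #{g : W →ₗ[K] V | g '' N = g₀ '' N}
      ≤ #(Fintype.piFinset fun _ : N ↦ (g₀ '' N).toFinset) := by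
        refine card_le_card_of_injOn (fun g x ↦ g x) (fun g hg ↦ ?_) fun g _ g' _ hgg' ↦ ?_
        · rw [mem_coe, mem_filter_univ] at hg
          exact mem_coe.mpr <| Fintype.mem_piFinset.mpr fun x ↦
            Set.mem_toFinset.mpr (hg ▸ Set.mem_image_of_mem g x.2)
        · exact LinearMap.ext_on hN fun x hx ↦ congrFun hgg' ⟨x, hx⟩
    _ = (g₀ '' N).ncard ^ N.ncard := by
        rw [Fintype.card_piFinset, prod_const, card_univ, ← Set.ncard_eq_toFinset_card',
          ← Nat.card_eq_fintype_card, Nat.card_coe_set_eq]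
    _ ≤ N.ncard ^ N.ncard := by
        gcongr
        exact Set.ncard_image_le N.toFinite

theorem dens_filter_image_eq_le (N : Set E) (S : Set V) :
    (dens {f : E →ₗ[K] V | f '' N = S} : ℝ) ≤
      N.ncard ^ N.ncard / Fintype.card V ^ finrank K (Submodule.span K N) := by
  let W := Submodule.span K N
  have hNW : N ⊆ Set.range W.subtype := Subtype.range_coe.symm ▸ Submodule.subset_span
  have himage (f : E →ₗ[K] V) : (f ∘ₗ W.subtype) '' (W.subtype ⁻¹' N) = f '' N := by
    rw [LinearMap.coe_comp, Set.image_comp, Set.image_preimage_eq_of_subset hNW]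
  have hncard : (W.subtype ⁻¹' N).ncard = N.ncard :=
    Set.ncard_preimage_of_injective_subset_range W.injective_subtype hNW
  have hspan : Submodule.span K (W.subtype ⁻¹' N) = ⊤ := Submodule.span_span_coe_preimage
  calc (dens {f : E →ₗ[K] V | f '' N = S} : ℝ)
      = dens {g : W →ₗ[K] V | g '' (W.subtype ⁻¹' N) = S} := by
        rw [← dens_filter_comp_mem W.injective_subtype]
        simp only [mem_filter_univ, himage]
    _ ≤ N.ncard ^ N.ncard / Fintype.card V ^ finrank K W := by
        rw [nnratCast_dens, card_linearMap, Nat.cast_pow, ← hncard]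
        gcongr
        exact_mod_cast card_filter_image_eq_le hspan S

end RandomLinearMap

section Supersaturation

variable {E V : Type*} [AddCommGroup E] [Module (ZMod 2) E] [Fintype E]
  [AddCommGroup V] [Module (ZMod 2) V] [Fintype V]

theorem dens_sub_le_card_mul_dens_filter_mapsTo {Z : Type*} [AddCommGroup Z] [Module (ZMod 2) Z]
    [Fintype Z] {N : Set E} {a : ℝ} (ha : 0 ≤ a)
    (hZ : ∀ P : Finset Z, 0 ∉ P → a ≤ dens P → HasRestriction N (P : Set Z))
    {M : Finset V} (hM : 0 ∉ M) :
    (dens M - 1 / Fintype.card Z - a : ℝ) ≤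
      Fintype.card (E →ₗ[ZMod 2] Z) * dens {f : E →ₗ[ZMod 2] V | Set.MapsTo f N M} := by
  refine (dens_sub_le_dens_filter_le_dens_filter_apply_mem (K := ZMod 2) (Z := Z) M ha).trans
    (dens_le_card_mul_dens_of_forall_exists_comp_mem fun L hL ↦ ?_)
  obtain ⟨ψ, hψ, hψN⟩ :=
    hZ {z | L z ∈ M} (by simpa using hM) ((mem_filter_univ L).mp hL)
  refine ⟨ψ, hψ, (mem_filter_univ _).mpr fun x hx ↦ ?_⟩
  exact (mem_filter_univ (ψ x)).mp (hψN (Set.mem_image_of_mem ψ hx))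

theorem exists_le_dens_filter_mapsTo {N : Set E} {c : ℕ}
    {φ : E →ₗ[ZMod 2] (Fin c → ZMod 2)} (hc : 1 ≤ c) (hφ : ∀ x ∈ N, φ x ≠ 0) {δ : ℝ} (hδ : 0 < δ) :
    ∃ β : ℝ, 0 < β ∧ ∀ (V : Type u) [AddCommGroup V] [Module (ZMod 2) V] [Fintype V]
      (M : Finset V), 0 ∉ M → 1 - 2 ^ (1 - (c : ℤ)) + δ ≤ dens M →
      β ≤ dens {f : E →ₗ[ZMod 2] V | Set.MapsTo f N M} := by
  obtain ⟨D, hD⟩ := exists_hasRestriction_of_le_dens hφ (half_pos hδ)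
  obtain ⟨s, hs⟩ := exists_pow_lt_of_lt_one (show 0 < δ / 4 by positivity) one_half_lt_one
  let Z := Fin (max D s) → ZMod 2
  have hcardZ : 1 / (Fintype.card Z : ℝ) ≤ δ / 4 := by
    calc 1 / (Fintype.card Z : ℝ) = (1 / 2) ^ max D s := by simp [Z]
      _ ≤ (1 / 2) ^ s := pow_le_pow_of_le_one (by norm_num) (by norm_num) (le_max_right D s)
      _ ≤ δ / 4 := hs.le
  have hhom : 0 < (Fintype.card (E →ₗ[ZMod 2] Z) : ℝ) := by exact_mod_cast Fintype.card_pos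
  have hthreshold : (2 : ℝ) ^ (1 - (c : ℤ)) ≤ 1 :=
    zpow_le_one_of_nonpos₀ one_le_two (by lia)
  refine ⟨δ / 4 / Fintype.card (E →ₗ[ZMod 2] Z), by positivity, fun V _ _ _ M h0 hM ↦ ?_⟩
  rw [div_le_iff₀' hhom]
  have hsuper := dens_sub_le_card_mul_dens_filter_mapsTo
    (a := 1 - 2 ^ (1 - (c : ℤ)) + δ / 2) (by linarith)
    (fun P hP0 hP ↦ hD Z P hP0 (by simp [Z]) hP) h0
  linarith

theorem dens_filter_mapsTo_sub_le_dens_filter_injective_and_mapsTo (N : Set E) (M : Set V) :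
    (dens {f : E →ₗ[ZMod 2] V | Set.MapsTo f N M} - Fintype.card E / Fintype.card V : ℝ) ≤
      dens {f : E →ₗ[ZMod 2] V | Function.Injective f ∧ Set.MapsTo f N M} := by
  have hsub : ({f | Set.MapsTo f N M} : Finset (E →ₗ[ZMod 2] V)) ⊆
      ({f | Function.Injective f ∧ Set.MapsTo f N M} : Finset (E →ₗ[ZMod 2] V)) ∪
        ({f | ¬ Function.Injective f} : Finset (E →ₗ[ZMod 2] V)) := by
    intro f
    simp only [mem_union, mem_filter_univ]
    tauto
  have hunion : (dens {f : E →ₗ[ZMod 2] V | Set.MapsTo f N M} : ℝ) ≤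
      dens {f : E →ₗ[ZMod 2] V | Function.Injective f ∧ Set.MapsTo f N M} +
        dens {f : E →ₗ[ZMod 2] V | ¬ Function.Injective f} := by
    exact_mod_cast (dens_le_dens hsub).trans (dens_union_le _ _)
  linarith [dens_filter_not_injective_le (K := ZMod 2) (E := E) (V := V)]

theorem dens_filter_injective_and_mapsTo_le (N : Set E) (M : Set V) :
    (dens {f : E →ₗ[ZMod 2] V | Function.Injective f ∧ Set.MapsTo f N M} : ℝ) ≤
      (restrictionSet N M).ncard * (N.ncard ^ N.ncard /
        Fintype.card V ^ finrank (ZMod 2) (Submodule.span (ZMod 2) N)) := by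
  rw [Set.ncard_eq_toFinset_card]
  refine dens_le_card_mul_of_cover (A := fun S ↦ {f : E →ₗ[ZMod 2] V | f '' N = S})
    (fun f hf ↦ ?_) fun S _ ↦ dens_filter_image_eq_le N S
  obtain ⟨hf, hfN⟩ := (mem_filter_univ f).mp hf
  refine ⟨f '' N, ?_, (mem_filter_univ f).mpr rfl⟩
  exact (Set.Finite.mem_toFinset _).mpr ⟨hfN.image_subset, f, hf, rfl⟩

end Supersaturation

theorem exists_le_ncard_restrictionSet {E : Type*} [AddCommGroup E] [Module (ZMod 2) E] [Finite E]
    {N : Set E} {c : ℕ} {φ : E →ₗ[ZMod 2] (Fin c → ZMod 2)} (hc : 1 ≤ c)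
    (hφ : ∀ x ∈ N, φ x ≠ 0) {δ : ℝ} (hδ : 0 < δ) :
    ∃ n₀ : ℕ, ∃ α : ℝ, 0 < α ∧ ∀ (V : Type u) [AddCommGroup V] [Module (ZMod 2) V] [Fintype V]
      (M : Finset V), 0 ∉ M → n₀ ≤ finrank (ZMod 2) V → 1 - 2 ^ (1 - (c : ℤ)) + δ ≤ dens M →
      α * Fintype.card V ^ finrank (ZMod 2) (Submodule.span (ZMod 2) N) ≤
        (restrictionSet N (M : Set V)).ncard := by
  have := Fintype.ofFinite E
  obtain ⟨β, hβ, hmaps⟩ := exists_le_dens_filter_mapsTo.{u} hc hφ hδ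
  obtain ⟨n₀, hn₀⟩ := pow_unbounded_of_one_lt (Fintype.card E / (β / 2)) (one_lt_two (α := ℝ))
  have hN : (0 : ℝ) < N.ncard ^ N.ncard := by exact_mod_cast Nat.pow_self_pos
  refine ⟨n₀, β / 2 / N.ncard ^ N.ncard, by positivity, fun V _ _ _ M h0 hV hM ↦ ?_⟩
  have hcardV : (2 : ℝ) ^ n₀ ≤ Fintype.card V := by
    rw [card_eq_pow_finrank (K := ZMod 2), ZMod.card]
    exact_mod_cast Nat.pow_le_pow_right two_pos hV
  have hV0 : (0 : ℝ) < Fintype.card V := lt_of_lt_of_le (by positivity) hcardV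
  have hratio : (Fintype.card E / Fintype.card V : ℝ) ≤ β / 2 := by
    rw [div_le_comm₀ hV0 (by positivity)]
    exact hn₀.le.trans hcardV
  have hinj : β / 2 ≤ dens {f : E →ₗ[ZMod 2] V | Function.Injective f ∧ Set.MapsTo f N M} := by
    linarith [hmaps V M h0 hM,
      dens_filter_mapsTo_sub_le_dens_filter_injective_and_mapsTo N (M : Set V)]
  have hcount := hinj.trans (dens_filter_injective_and_mapsTo_le N (M : Set V))
  rw [← mul_div_assoc, le_div_iff₀ (by positivity)] at hcount
  rwa [div_mul_eq_mul_div, div_le_iff₀ hN]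

theorem ncard_restrictionSet_preimage_le {E V V' : Type*} [AddCommMonoid E] [Module (ZMod 2) E]
    [AddCommMonoid V] [Module (ZMod 2) V] [AddCommMonoid V'] [Module (ZMod 2) V'] [Finite V']
    {ι : V →ₗ[ZMod 2] V'} (hι : Function.Injective ι) (N : Set E) (M : Set V') :
    (restrictionSet N (ι ⁻¹' M)).ncard ≤ (restrictionSet N M).ncard := by
  refine Set.ncard_le_ncard_of_injOn (ι '' ·) ?_ hι.image_injective.injOn
  rintro _ ⟨hψM, ψ, hψ, rfl⟩
  exact ⟨Set.image_subset_iff.mpr hψM, ι ∘ₗ ψ, hι.comp hψ,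
    by rw [LinearMap.coe_comp, Set.image_comp]⟩

section CriticalNumber

variable {n : ℕ} {N : Set (Fin n → ZMod 2)}

theorem exists_linearMap_critNum_forall_ne_zero (hN : 0 ∉ N) :
    ∃ φ : (Fin n → ZMod 2) →ₗ[ZMod 2] (Fin (critNum N) → ZMod 2), ∀ x ∈ N, φ x ≠ 0 :=
  Nat.sInf_mem (s := {c | ∃ φ : (Fin n → ZMod 2) →ₗ[ZMod 2] (Fin c → ZMod 2), ∀ x ∈ N, φ x ≠ 0})
    ⟨n, LinearMap.id, fun _ hx ↦ ne_of_mem_of_not_mem hx hN⟩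

theorem critNum_pos (hN : 0 ∉ N) (hne : N.Nonempty) : 0 < critNum N := by
  obtain ⟨φ, hφ⟩ := exists_linearMap_critNum_forall_ne_zero hN
  obtain ⟨x, hx⟩ := hne
  refine Nat.pos_of_ne_zero fun h0 ↦ hφ x hx ?_
  have : IsEmpty (Fin (critNum N)) := by rw [h0]; infer_instance
  exact Subsingleton.elim _ _

end CriticalNumber

theorem card_span_eq_two_pow_rankM {n : ℕ} (M : Set (Fin n → ZMod 2)) :
    Fintype.card (Submodule.span (ZMod 2) M) = 2 ^ rankM M := by
  rw [card_eq_pow_finrank (K := ZMod 2), ZMod.card, rankM]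

theorem dens_toFinset_preimage_span {n : ℕ} (M : Set (Fin n → ZMod 2)) :
    (dens ((Submodule.span (ZMod 2) M).subtype ⁻¹' M).toFinset : ℝ) = M.ncard / 2 ^ rankM M := by
  rw [nnratCast_dens, ← Set.ncard_eq_toFinset_card', card_span_eq_two_pow_rankM,
    Set.ncard_preimage_of_injective_subset_range (Submodule.injective_subtype _)
      (Subtype.range_coe.symm ▸ Submodule.subset_span), Nat.cast_pow, Nat.cast_two]

/-- Counting matroidal Erdős–Stone theorem. -/
theorem counting_erdos_stone {m : ℕ} (N : Set (Fin m → ZMod 2))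
    (hN0 : 0 ∉ N) (hNne : N.Nonempty) {δ : ℝ} (hδ : 0 < δ) :
    ∃ n₀ : ℕ, 0 < n₀ ∧ ∃ α : ℝ, 0 < α ∧
      ∀ n : ℕ, ∀ M : Set (Fin n → ZMod 2), 0 ∉ M → n₀ ≤ rankM M →
        (1 - 2 ^ (1 - (critNum N : ℤ)) + δ) * 2 ^ rankM M ≤ (M.ncard : ℝ) →
        α * ((2 : ℝ) ^ rankM M) ^ rankM N ≤ ((restrictionSet N M).ncard : ℝ) := by
  obtain ⟨φ, hφ⟩ := exists_linearMap_critNum_forall_ne_zero hN0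
  obtain ⟨n₀, α, hα, hcount⟩ := exists_le_ncard_restrictionSet (critNum_pos hN0 hNne) hφ hδ
  refine ⟨n₀ + 1, n₀.succ_pos, α, hα, fun n M hM0 hrank hM ↦ ?_⟩
  let V := Submodule.span (ZMod 2) M
  calc α * ((2 : ℝ) ^ rankM M) ^ rankM N
      = α * (Fintype.card V : ℝ) ^ rankM N := by
        rw [card_span_eq_two_pow_rankM, Nat.cast_pow, Nat.cast_two]
    _ ≤ (restrictionSet N ((V.subtype ⁻¹' M).toFinset : Set V)).ncard := by
        refine hcount V _ (by rwa [Set.mem_toFinset]) (n₀.le_succ.trans hrank) ?_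
        rwa [dens_toFinset_preimage_span, le_div_iff₀ (by positivity)]
    _ ≤ (restrictionSet N M).ncard := by
        rw [Set.coe_toFinset]
        exact_mod_cast ncard_restrictionSet_preimage_le V.injective_subtype N M
end

section
/- (Govaerts–Storme; matroidal Andrásfai–Erdős–Sós analogue.) Let t ≥ 2 be an integer and r ≥ t + 2. If M ⊆ 𝔽₂ⁿ \ {0} is a matroid of rank r with no PG(t−1,2)-restriction and |M| > 2ʳ·(1 − 2^{1−t} − 3·2^{−2−t}), then χ(M) ≤ t − 1. -/
open scoped Classical

/-!
Inside the span of `M`, the nonzero vectors outside `M` form a set `B` meeting every `t`-dimensional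
subspace, and `B` is small. We show by induction on `t` that such a `B` contains all nonzero vectors
of a subspace of codimension `t - 1`; a linear map with that kernel vanishes nowhere on `M`.

For the inductive step, contract a point outside `B`. This yields a subspace `W` of codimension
`t - 2` with `B` covering about half of it, so `B` is sparse outside `W`. A sum-closed triple `a`,
`b`, `a + b` in `W` avoiding `B` would span a line disjoint from `B`, which this sparsity allows us
to extend greedily to a `t`-dimensional subspace disjoint from `B`. Hence the nonzero vectors of `W`
outside `B` form a sum-free set, of density greater than `5 / 16`. The Cayley graph of this set has
no odd cycle: odd girth `5` would put an image of the Clebsch graph in it and force density at most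
`5 / 16`, while odd girth at least `7` would force density at most `2 / 7`. So some functional
vanishes nowhere on that set, and its kernel is the desired hyperplane of `W`.
-/

open Module

section OddGirth

theorem natCard_mul_ncard_le {G I : Type*} [AddGroup G] [Finite G] [Finite I] {M : Set G} {c : ℕ}
    (k : I → G) (h : ∀ x, {i | x + k i ∈ M}.ncard ≤ c) :
    Nat.card I * M.ncard ≤ Nat.card G * c := by
  have := Fintype.ofFinite G
  have := Fintype.ofFinite I
  rw [Nat.card_eq_fintype_card, Nat.card_eq_fintype_card]
  refine Finset.card_mul_le_card_mul (fun i x ↦ x + k i ∈ M) (fun i _ ↦ ?_) fun x _ ↦ ?_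
  · rw [← Set.ncard_coe_finset, ← Set.ncard_image_of_injective M (sub_left_injective (b := k i))]
    refine Set.ncard_le_ncard ?_
    rintro _ ⟨y, hy, rfl⟩
    simpa [Finset.bipartiteAbove] using hy
  · rw [← Set.ncard_coe_finset]
    simpa [Finset.bipartiteBelow] using h x

theorem ncard_le_two_of_add_one_notMem {S : Set (Fin 5)} (hS : ∀ i ∈ S, i + 1 ∉ S) :
    S.ncard ≤ 2 := by
  have key : ∀ T : Finset (Fin 5), (∀ i ∈ T, i + 1 ∉ T) → T.card ≤ 2 := by decide
  rw [Set.ncard_eq_toFinset_card']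
  exact key _ (by simpa using hS)

theorem ncard_le_two_of_sub_eq_two_or_five {n : ℕ} {S : Set (Fin n)}
    (hS : ∀ i ∈ S, ∀ j ∈ S, i < j → (j : ℕ) - i = 2 ∨ (j : ℕ) - i = 5) : S.ncard ≤ 2 := by
  by_contra! h
  obtain ⟨a, ha, b, hb, c, hc, hab, hac, hbc⟩ := (Set.two_lt_ncard).1 h
  have := hS a ha b hb
  have := hS b hb a ha
  have := hS a ha c hc
  have := hS c hc a ha
  have := hS b hb c hc
  have := hS c hc b hb
  omega

theorem ncard_le_five_of_zero_mem_of_forall_add_ne {T : Set (Fin 4 → ZMod 2)} (h0 : 0 ∈ T)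
    (hT : ∀ u ∈ T, ∀ v ∈ T, u + v ≠ 1 ∧ ∀ i, u + v ≠ Pi.single i 1) : T.ncard ≤ 5 := by
  -- In the Clebsch graph the non-neighbours of `0` induce the Petersen graph, whose vertices are
  -- partitioned by the two disjoint pentagons `P` and `Q`.
  let P : Fin 5 → Fin 4 → ZMod 2 :=
    ![![1, 1, 0, 0], ![0, 0, 1, 1], ![0, 1, 1, 1], ![0, 1, 1, 0], ![1, 1, 1, 0]]
  let Q : Fin 5 → Fin 4 → ZMod 2 :=
    ![![1, 0, 1, 0], ![0, 1, 0, 1], ![1, 1, 0, 1], ![1, 0, 0, 1], ![1, 0, 1, 1]]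
  have hP : ∀ i, P i + P (i + 1) = 1 ∨ ∃ j, P i + P (i + 1) = Pi.single j 1 := by decide
  have hQ : ∀ i, Q i + Q (i + 1) = 1 ∨ ∃ j, Q i + Q (i + 1) = Pi.single j 1 := by decide
  have cover : ∀ v : Fin 4 → ZMod 2, v = 0 ∨ (v = 1 ∨ ∃ i, v = Pi.single i 1) ∨
      (∃ i, P i = v) ∨ ∃ i, Q i = v := by decide
  have card_pentagon : ∀ R : Fin 5 → Fin 4 → ZMod 2,
      (∀ i, R i + R (i + 1) = 1 ∨ ∃ j, R i + R (i + 1) = Pi.single j 1) →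
      (R '' {i | R i ∈ T}).ncard ≤ 2 := fun R hR ↦
    (Set.ncard_image_le).trans <| ncard_le_two_of_add_one_notMem fun i hi hi' ↦
      (hR i).elim (hT _ hi _ hi').1 fun ⟨j, hj⟩ ↦ (hT _ hi _ hi').2 j hj
  have hsub : T ⊆ {0} ∪ (P '' {i | P i ∈ T} ∪ Q '' {i | Q i ∈ T}) := by
    intro v hv
    rcases cover v with rfl | h | ⟨i, rfl⟩ | ⟨i, rfl⟩
    · exact .inl rfl
    · have := hT v hv 0 h0
      rw [add_zero] at this
      exact (h.elim this.1 fun ⟨i, hi⟩ ↦ this.2 i hi).elim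
    · exact .inr (.inl ⟨i, hv, rfl⟩)
    · exact .inr (.inr ⟨i, hv, rfl⟩)
  calc T.ncard ≤ _ := Set.ncard_le_ncard hsub
    _ ≤ 1 + (2 + 2) := by
      grw [Set.ncard_union_le, Set.ncard_union_le, card_pentagon P hP, card_pentagon Q hQ,
        Set.ncard_singleton]

theorem ncard_le_five_of_forall_add_ne {T : Set (Fin 4 → ZMod 2)}
    (hT : ∀ u ∈ T, ∀ v ∈ T, u + v ≠ 1 ∧ ∀ i, u + v ≠ Pi.single i 1) : T.ncard ≤ 5 := by
  obtain rfl | ⟨w, hw⟩ := T.eq_empty_or_nonempty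
  · simp
  · rw [← Set.ncard_image_of_injective T (add_right_injective w)]
    refine ncard_le_five_of_zero_mem_of_forall_add_ne ⟨w, hw, ZModModule.add_self w⟩ ?_
    rintro _ ⟨u, hu, rfl⟩ _ ⟨v, hv, rfl⟩
    have : w + u + (w + v) = u + v := by
      rw [add_add_add_comm, ZModModule.add_self, zero_add]
    simpa only [this] using hT u hu v hv

variable {V : Type*} [AddCommGroup V] {M : Set V} {n : ℕ}

/-- Every odd-length list of elements of `M` with sum zero has length at least `n`. Over `𝔽₂` this
says that the Cayley graph of `V` with connection set `M` has odd girth at least `n`. -/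
def OddGirthGE (n : ℕ) (M : Set V) : Prop :=
  ∀ L : List V, (∀ x ∈ L, x ∈ M) → Odd L.length → L.sum = 0 → n ≤ L.length

variable [Module (ZMod 2) V]

theorem oddGirthGE_five (hM : ∀ a ∈ M, ∀ b ∈ M, a + b ∉ M) : OddGirthGE 5 M := by
  intro L hL hodd hsum
  by_contra! hlt
  match L with
  | [a] =>
    obtain rfl : a = 0 := by simpa using hsum
    have h0 : (0 : V) ∈ M := hL 0 (by simp)
    exact hM 0 h0 0 h0 (by rwa [add_zero])
  | [a, b, c] =>
    have hab : a + b = c := by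
      rw [← sub_eq_zero, ZModModule.sub_eq_add, ← hsum]
      simp [add_assoc]
    exact hM a (hL a (by simp)) b (hL b (by simp)) (hab ▸ hL c (by simp))
  | [] | [_, _] | [_, _, _, _] => simp [Nat.odd_iff] at hodd
  | _ :: _ :: _ :: _ :: _ :: _ => grind

theorem OddGirthGE.le_length_add_two (hM : OddGirthGE n M) {x u v : V} (hu : x + u ∈ M)
    (hv : x + v ∈ M) {L : List V} (hL : ∀ y ∈ L, y ∈ M) (hodd : Odd L.length)
    (hsum : L.sum = u + v) : n ≤ L.length + 2 := by
  refine hM ((x + u) :: (x + v) :: L) (by simpa [hu, hv] using hL)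
    (by simpa [parity_simps] using hodd) ?_
  rw [List.sum_cons, List.sum_cons, hsum, ← add_assoc, add_add_add_comm x u x v,
    ZModModule.add_self, zero_add, ZModModule.add_self]

variable [Finite V]

theorem OddGirthGE.sixteen_mul_ncard_le (hM : OddGirthGE 5 M) {a : Fin 4 → V}
    (ha : ∀ i, a i ∈ M) (hsum : ∑ i, a i ∈ M) : 16 * M.ncard ≤ Nat.card V * 5 := by
  let k := Fintype.linearCombination (ZMod 2) a
  suffices h : ∀ x, {v | x + k v ∈ M}.ncard ≤ 5 by
    simpa using natCard_mul_ncard_le k h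
  refine fun x ↦ ncard_le_five_of_forall_add_ne fun u hu v hv ↦ ?_
  have notMem : k (u + v) ∉ M := fun h ↦ by
    have := hM.le_length_add_two hu hv (List.forall_mem_singleton.2 h) (by simp) (by simp)
    simp at this
  refine ⟨fun h ↦ notMem ?_, fun i h ↦ notMem ?_⟩
  · simpa [h, k, Fintype.linearCombination_apply] using hsum
  · simpa [h, k, Fintype.linearCombination_apply_single] using ha i

-- The partial sums of `L` trace a shortest odd cycle. Two of its first seven vertices with a common
-- neighbour close up a shorter odd cycle unless their distance along it is `2` or `5`.
theorem OddGirthGE.seven_mul_ncard_le {L : List V} (hM : OddGirthGE L.length M)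
    (hL : ∀ x ∈ L, x ∈ M) (hodd : Odd L.length) (hsum : L.sum = 0) (hlen : 7 ≤ L.length) :
    7 * M.ncard ≤ Nat.card V * 2 := by
  let k : Fin 7 → V := fun i ↦ (L.take i).sum
  suffices h : ∀ x, {i | x + k i ∈ M}.ncard ≤ 2 by
    simpa using natCard_mul_ncard_le k h
  refine fun x ↦ ncard_le_two_of_sub_eq_two_or_five fun i hi j hj hij ↦ ?_
  by_contra! hne
  have hij' : (i : ℕ) < j := hij
  have hj7 := j.isLt
  obtain heven | hodd' := Nat.even_or_odd ((j : ℕ) - i)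
  · have hk : (L.take i ++ L.drop j).sum = k i + k j := by
      rw [List.sum_append, eq_comm, ← sub_eq_zero, add_sub_add_left_eq_sub, ZModModule.sub_eq_add,
        List.sum_take_add_sum_drop, hsum]
    refine absurd (hM.le_length_add_two hi hj ?_ ?_ hk) ?_ <;> grind
  · have hk : ((L.take j).drop i).sum = k i + k j := by
      have : L.take i = (L.take j).take i := by rw [List.take_take, min_eq_left hij'.le]
      simp only [k]
      rw [this, ← List.sum_take_add_sum_drop (L.take j) i, ← add_assoc, ZModModule.add_self,
        zero_add]
    refine absurd (hM.le_length_add_two hi hj ?_ ?_ hk) ?_ <;> grind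

theorem OddGirthGE.of_card_lt (hM : OddGirthGE 5 M) (hcard : Nat.card V * 5 < 16 * M.ncard)
    (n : ℕ) : OddGirthGE n M := by
  induction n with
  | zero => exact fun _ _ _ _ ↦ Nat.zero_le _
  | succ n ih =>
    intro L hL hodd hsum
    by_contra! hlt
    obtain rfl : n = L.length := by grind [OddGirthGE]
    have h5 := hM L hL hodd hsum
    obtain hlen | hlen : L.length = 5 ∨ 7 ≤ L.length := by grind
    · match L with
      | [a, b, c, d, e] =>
        have he : ∑ i, ![a, b, c, d] i = e := by
          rw [← sub_eq_zero, ZModModule.sub_eq_add, ← hsum]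
          simp [Fin.sum_univ_succ, add_assoc]
        have := hM.sixteen_mul_ncard_le (a := ![a, b, c, d])
          (by simp_all [Fin.forall_fin_succ]) (he ▸ hL e (by simp))
        omega
    · have := ih.seven_mul_ncard_le hL hodd hsum hlen
      omega

end OddGirth

section Dual

variable {V : Type*} [AddCommGroup V] [Module (ZMod 2) V] {M : Set V}

theorem exists_list_of_mem_span {x : V} (hx : x ∈ Submodule.span (ZMod 2) M) :
    ∃ L : List V, (∀ y ∈ L, y ∈ M) ∧ L.sum = x := by
  induction hx using Submodule.span_induction with
  | mem x hx => exact ⟨[x], by simpa, by simp⟩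
  | zero => exact ⟨[], by simp, rfl⟩
  | add x y _ _ hx hy =>
    obtain ⟨L, hL, rfl⟩ := hx
    obtain ⟨L', hL', rfl⟩ := hy
    exact ⟨L ++ L', by grind, List.sum_append⟩
  | smul c x _ hx =>
    obtain rfl | rfl : c = 0 ∨ c = 1 := by decide +revert
    · exact ⟨[], by simp, by simp⟩
    · simpa only [one_smul] using hx

-- A list over `M` with sum `s` and length `l` certifies that `(s, l)` lies in the span of
-- `M ×ˢ {1}`, so `f` is found by separating `(0, 1)` from that span.
theorem exists_forall_apply_ne_zero_of_oddGirthGE (hM : ∀ n, OddGirthGE n M) :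
    ∃ f : Dual (ZMod 2) V, ∀ x ∈ M, f x ≠ 0 := by
  have notMem : ((0, 1) : V × ZMod 2) ∉ Submodule.span (ZMod 2) (M ×ˢ {1}) := fun h ↦ by
    obtain ⟨L, hL, hsum⟩ := exists_list_of_mem_span h
    have hfst : (L.map Prod.fst).sum = 0 := by
      rw [← AddMonoidHom.coe_fst, ← map_list_sum, hsum, AddMonoidHom.coe_fst]
    have hlen : ((L.map Prod.fst).length : ZMod 2) = 1 := by
      have hsnd : L.map Prod.snd = List.replicate L.length 1 :=
        List.eq_replicate_iff.2 ⟨List.length_map _, by grind⟩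
      have h1 : (L.map Prod.snd).sum = 1 := by
        rw [← AddMonoidHom.coe_snd, ← map_list_sum, hsum, AddMonoidHom.coe_snd]
      rwa [hsnd, List.sum_replicate, nsmul_one, ← List.length_map Prod.fst] at h1
    have := hM ((L.map Prod.fst).length + 1) _ (by grind) (ZMod.natCast_eq_one_iff_odd.1 hlen) hfst
    omega
  obtain ⟨g, hg, hle⟩ := Submodule.exists_le_ker_of_notMem notMem
  refine ⟨g ∘ₗ LinearMap.inl _ _ _, fun x hx hx0 ↦ hg ?_⟩
  have hx1 : g (x, 1) = 0 := hle (Submodule.subset_span ⟨hx, rfl⟩)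
  have hx0 : g (x, 0) = 0 := hx0
  have hsub : ((0, 1) : V × ZMod 2) = (x, 1) - (x, 0) := by simp
  rw [hsub, map_sub, hx1, hx0, sub_zero]

theorem exists_forall_apply_ne_zero_of_forall_add_notMem [Finite V]
    (hM : ∀ a ∈ M, ∀ b ∈ M, a + b ∉ M) (hcard : Nat.card V * 5 < 16 * M.ncard) :
    ∃ f : Dual (ZMod 2) V, ∀ x ∈ M, f x ≠ 0 :=
  exists_forall_apply_ne_zero_of_oddGirthGE ((oddGirthGE_five hM).of_card_lt hcard)

end Dual

theorem finrank_comap_add_finrank {K V W : Type*} [DivisionRing K] [AddCommGroup V] [Module K V]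
    [AddCommGroup W] [Module K W] [FiniteDimensional K V] {f : V →ₗ[K] W}
    (hf : Function.Surjective f) (S : Submodule K W) :
    finrank K (S.comap f) + finrank K W = finrank K V + finrank K S := by
  have := Module.Finite.of_surjective f hf
  have hsurj : Function.Surjective (S.mkQ ∘ₗ f) := S.mkQ_surjective.comp hf
  have h := (S.mkQ ∘ₗ f).finrank_range_add_finrank_ker
  rw [LinearMap.range_eq_top.2 hsurj, finrank_top, LinearMap.ker_comp, Submodule.ker_mkQ] at h
  have := S.finrank_quotient_add_finrank
  omega

section BlockingSet

variable {V : Type*} [AddCommGroup V] [Module (ZMod 2) V] {B : Set V} {d k : ℕ}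

/-- `B` meets every `d`-dimensional subspace of `V`. In `PG(V)`, where points are the nonzero
vectors, this is a blocking set with respect to projective `(d - 1)`-spaces; as the zero vector is
not a point, `0 ∉ B` is assumed separately. -/
def IsBlockingSet (d : ℕ) (B : Set V) : Prop :=
  ∀ S : Submodule (ZMod 2) V, finrank (ZMod 2) S = d → ¬ Disjoint (S : Set V) B

theorem mem_span_singleton_iff_eq_zero_or_eq {x y : V} :
    y ∈ Submodule.span (ZMod 2) {x} ↔ y = 0 ∨ y = x := by
  have hexists : (∃ c : ZMod 2, c • x = y) ↔ (0 : ZMod 2) • x = y ∨ (1 : ZMod 2) • x = y :=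
    Fin.exists_fin_two
  rw [Submodule.mem_span_singleton, hexists, zero_smul, one_smul, @eq_comm V 0, @eq_comm V x]

theorem disjoint_sup_span_singleton {S : Submodule (ZMod 2) V} {x : V}
    (hS : Disjoint (S : Set V) B) (hx : ∀ s ∈ S, x + s ∉ B) :
    Disjoint ((S ⊔ Submodule.span (ZMod 2) {x} : Submodule (ZMod 2) V) : Set V) B := by
  refine Set.disjoint_left.2 fun y hy ↦ ?_
  obtain ⟨s, hs, _, hc, rfl⟩ := Submodule.mem_sup.1 hy
  obtain rfl | rfl := mem_span_singleton_iff_eq_zero_or_eq.1 hc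
  · rw [add_zero]
    exact Set.disjoint_left.1 hS hs
  · rw [add_comm]
    exact hx s hs

theorem zero_notMem_image_mkQ_span_singleton {p : V} (hB : 0 ∉ B) (hp : p ∉ B) :
    0 ∉ (Submodule.span (ZMod 2) {p}).mkQ '' B := by
  rintro ⟨b, hb, hb0⟩
  rw [Submodule.mkQ_apply, Submodule.Quotient.mk_eq_zero,
    mem_span_singleton_iff_eq_zero_or_eq] at hb0
  obtain rfl | rfl := hb0
  exacts [hB hb, hp hb]

variable [Finite V]

theorem exists_finrank_eq_two_disjoint {W : Submodule (ZMod 2) V} {a b : V} (ha : a ∈ W)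
    (hb : b ∈ W) (hB : 0 ∉ B) (haB : a ∉ insert 0 B) (hbB : b ∉ insert 0 B)
    (habB : a + b ∉ insert 0 B) :
    ∃ L ≤ W, finrank (ZMod 2) L = 2 ∧ Disjoint (L : Set V) B := by
  simp only [Set.mem_insert_iff, not_or] at haB hbB habB
  have ha_notMem : a ∉ (⊥ : Submodule (ZMod 2) V) := haB.1
  have hb_notMem : b ∉ ⊥ ⊔ Submodule.span (ZMod 2) {a} := by
    rw [bot_sup_eq, mem_span_singleton_iff_eq_zero_or_eq]
    rintro (rfl | rfl)
    · exact hbB.1 rfl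
    · exact habB.1 (ZModModule.add_self b)
  refine ⟨⊥ ⊔ Submodule.span (ZMod 2) {a} ⊔ Submodule.span (ZMod 2) {b}, ?_, ?_, ?_⟩
  · simp [ha, hb]
  · rw [Submodule.finrank_sup_span_singleton hb_notMem,
      Submodule.finrank_sup_span_singleton ha_notMem, finrank_bot]
  · refine disjoint_sup_span_singleton (disjoint_sup_span_singleton ?_ ?_) ?_
    · simpa using hB
    · simpa using haB.2
    · rw [bot_sup_eq]
      intro s hs
      obtain rfl | rfl := mem_span_singleton_iff_eq_zero_or_eq.1 hs
      · simpa using hbB.2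
      · simpa [add_comm b] using habB.2

theorem natCard_mul_two_pow_of_finrank_add_eq {W : Submodule (ZMod 2) V}
    (hW : finrank (ZMod 2) W + k = finrank (ZMod 2) V) : Nat.card W * 2 ^ k = Nat.card V := by
  rw [natCard_eq_pow_finrank (K := ZMod 2) (V := W),
    natCard_eq_pow_finrank (K := ZMod 2) (V := V), ← hW, Nat.card_zmod, pow_add]

theorem exists_notMem_forall_add_notMem {S W : Submodule (ZMod 2) V} (hSW : S ≤ W)
    (h : Nat.card W + Nat.card S * (B \ W).ncard < Nat.card V) :
    ∃ x ∉ W, ∀ s ∈ S, x + s ∉ B := by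
  by_contra! hcon
  have hcover : (Set.univ : Set V) ⊆
      W ∪ (fun y : V × V ↦ y.2 - y.1) '' ((S : Set V) ×ˢ (B \ W)) := by
    intro x _
    by_cases hx : x ∈ W
    · exact .inl hx
    · obtain ⟨s, hs, hxs⟩ := hcon x hx
      exact .inr ⟨(s, x + s), ⟨hs, hxs, fun h ↦ hx ((W.add_mem_iff_left (hSW hs)).1 h)⟩,
        add_sub_cancel_right x s⟩
  have := Set.ncard_le_ncard hcover
  grw [Set.ncard_univ, Set.ncard_union_le, Set.ncard_image_le, Set.ncard_prod] at this
  exact this.not_gt h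

theorem exists_finrank_eq_add_disjoint {S W : Submodule (ZMod 2) V} (hSW : S ≤ W)
    (hW : finrank (ZMod 2) W + k = finrank (ZMod 2) V) (hS : Disjoint (S : Set V) B)
    (hcard : 2 ^ (finrank (ZMod 2) S + k) * (B \ W).ncard < Nat.card V) :
    ∃ T : Submodule (ZMod 2) V,
      finrank (ZMod 2) T = finrank (ZMod 2) S + k ∧ Disjoint (T : Set V) B := by
  induction k generalizing S W with
  | zero => exact ⟨S, rfl, hS⟩
  | succ k ih =>
    have hWV := natCard_mul_two_pow_of_finrank_add_eq hW
    have hScard := natCard_eq_pow_finrank (K := ZMod 2) (V := S)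
    rw [Nat.card_zmod] at hScard
    obtain ⟨x, hxW, hxB⟩ : ∃ x ∉ W, ∀ s ∈ S, x + s ∉ B := by
      refine exists_notMem_forall_add_notMem hSW ?_
      rw [pow_add, ← hScard] at hcard
      have h2 : 2 ≤ 2 ^ (k + 1) := Nat.le_self_pow k.succ_ne_zero 2
      nlinarith
    have hfS := Submodule.finrank_sup_span_singleton (fun h ↦ hxW (hSW h))
    have hfW := Submodule.finrank_sup_span_singleton hxW
    obtain ⟨T, hT, hTB⟩ := ih (sup_le_sup_right hSW (Submodule.span (ZMod 2) {x})) (by omega)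
      (disjoint_sup_span_singleton hS hxB) <| by
        refine lt_of_le_of_lt ?_ hcard
        rw [hfS, add_right_comm, add_assoc]
        gcongr
        · exact Set.toFinite _
        · exact le_sup_left
    exact ⟨T, by omega, hTB⟩

theorem IsBlockingSet.image_mkQ_span_singleton {p : V} (hB : IsBlockingSet (d + 1) B)
    (hp : p ≠ 0) :
    IsBlockingSet d ((Submodule.span (ZMod 2) {p}).mkQ '' B) := by
  intro S hS hdisj
  have hcomap := finrank_comap_add_finrank (Submodule.span (ZMod 2) {p}).mkQ_surjective S
  have hquot := (Submodule.span (ZMod 2) {p}).finrank_quotient_add_finrank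
  rw [finrank_span_singleton hp] at hquot
  refine hB (S.comap (Submodule.span (ZMod 2) {p}).mkQ) (by omega) ?_
  exact Set.disjoint_left.2 fun x hx hxB ↦ Set.disjoint_left.1 hdisj hx ⟨x, hxB, rfl⟩

theorem natCard_comap_mkQ_le_two_mul {p : V}
    {W : Submodule (ZMod 2) (V ⧸ Submodule.span (ZMod 2) {p})}
    (hW : ∀ y ∈ W, y ≠ 0 → y ∈ (Submodule.span (ZMod 2) {p}).mkQ '' B) :
    Nat.card (W.comap (Submodule.span (ZMod 2) {p}).mkQ) ≤
      2 * ((B ∩ W.comap (Submodule.span (ZMod 2) {p}).mkQ).ncard + 1) := by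
  set U := W.comap (Submodule.span (ZMod 2) {p}).mkQ
  have hcover : (U : Set V) ⊆ insert 0 (B ∩ U) ∪ (p + ·) '' insert 0 (B ∩ U) := by
    intro x hx
    by_cases hx0 : (Submodule.span (ZMod 2) {p}).mkQ x = 0
    · rw [Submodule.mkQ_apply, Submodule.Quotient.mk_eq_zero,
        mem_span_singleton_iff_eq_zero_or_eq] at hx0
      obtain rfl | rfl := hx0
      · exact .inl (.inl rfl)
      · exact .inr ⟨0, .inl rfl, add_zero x⟩
    · obtain ⟨b, hb, hbx⟩ := hW _ hx hx0
      have hbU : b ∈ U := by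
        rw [Submodule.mem_comap, hbx]
        exact hx
      rw [Submodule.mkQ_apply, Submodule.mkQ_apply, Submodule.Quotient.eq,
        mem_span_singleton_iff_eq_zero_or_eq] at hbx
      obtain hbx | hbx := hbx
      · exact .inl (.inr (sub_eq_zero.1 hbx ▸ ⟨hb, hbU⟩))
      · exact .inr ⟨b, .inr ⟨hb, hbU⟩, by
          simp only [← hbx, ZModModule.sub_eq_add, ZModModule.add_self, add_comm b x,
            add_assoc, add_zero]⟩
  have := Set.ncard_le_ncard hcover
  grw [Set.ncard_union_le, Set.ncard_image_le, Set.ncard_insert_le] at this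
  rw [two_mul]
  exact this

theorem IsBlockingSet.add_mem_insert_zero (hB : IsBlockingSet (k + 2) B) (hB0 : 0 ∉ B)
    {W : Submodule (ZMod 2) V} (hW : finrank (ZMod 2) W + k = finrank (ZMod 2) V)
    (hcard : 2 ^ (k + 2) * (B \ W).ncard < Nat.card V) {a b : V} (ha : a ∈ W) (hb : b ∈ W)
    (haB : a ∉ insert 0 B) (hbB : b ∉ insert 0 B) : a + b ∈ insert 0 B := by
  by_contra habB
  obtain ⟨L, hLW, hL, hLB⟩ := exists_finrank_eq_two_disjoint ha hb hB0 haB hbB habB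
  obtain ⟨T, hT, hTB⟩ := exists_finrank_eq_add_disjoint hLW hW hLB (by rwa [hL, add_comm 2])
  exact hB T (by omega) hTB

theorem exists_finrank_add_one_eq_of_add_mem_insert_zero
    (hB : ∀ a ∉ insert 0 B, ∀ b ∉ insert 0 B, a + b ∈ insert 0 B)
    (hcard : 16 * (B.ncard + 1) < 11 * Nat.card V) :
    ∃ U : Submodule (ZMod 2) V, finrank (ZMod 2) U + 1 = finrank (ZMod 2) V ∧
      ∀ x ∈ U, x ≠ 0 → x ∈ B := by
  have hcompl := Set.ncard_add_ncard_compl (insert 0 B)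
  have hinsert := Set.ncard_insert_le 0 B
  obtain ⟨f, hf⟩ := exists_forall_apply_ne_zero_of_forall_add_notMem (M := (insert 0 B)ᶜ)
    (fun a ha b hb h ↦ h (hB a ha b hb)) (by omega)
  obtain ⟨x, hx⟩ : (insert 0 B)ᶜ.Nonempty := by
    rw [← Set.ncard_pos]
    omega
  have hf0 : f ≠ 0 := fun h ↦ hf x hx (by rw [h, LinearMap.zero_apply])
  refine ⟨f.ker, Dual.finrank_ker_add_one_of_ne_zero hf0, fun y hy hy0 ↦ ?_⟩
  by_contra hyB
  exact hf y (by simp [hy0, hyB]) hy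

theorem IsBlockingSet.exists_forall_mem_of_natCard_le (hB : IsBlockingSet (k + 2) B) (hB0 : 0 ∉ B)
    {W : Submodule (ZMod 2) V} (hW : finrank (ZMod 2) W + k = finrank (ZMod 2) V)
    (hWB : Nat.card W ≤ 2 * ((B ∩ W).ncard + 1)) (hcard : 16 * (B.ncard + 1) < 11 * Nat.card W) :
    ∃ U : Submodule (ZMod 2) V, finrank (ZMod 2) U + (k + 1) = finrank (ZMod 2) V ∧
      ∀ x ∈ U, x ≠ 0 → x ∈ B := by
  have hsdiff := Set.ncard_inter_add_ncard_sdiff_eq_ncard B (W : Set V)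
  have hcardW : 2 ^ (k + 2) * (B \ W).ncard < Nat.card V := by
    rw [← natCard_mul_two_pow_of_finrank_add_eq hW, pow_add, mul_comm (Nat.card W), mul_assoc]
    gcongr
    omega
  have hmem : ∀ a : W, a ∈ insert 0 (Subtype.val ⁻¹' B) ↔ (a : V) ∈ insert 0 B := by simp
  have hadd : ∀ a ∉ insert 0 (Subtype.val ⁻¹' B), ∀ b ∉ insert 0 (Subtype.val ⁻¹' B),
      a + b ∈ insert 0 (Subtype.val ⁻¹' B : Set W) := fun a ha b hb ↦
    (hmem _).2 <| hB.add_mem_insert_zero hB0 hW hcardW a.2 b.2 ((hmem a).not.1 ha)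
      ((hmem b).not.1 hb)
  have hncard : (Subtype.val ⁻¹' B : Set W).ncard ≤ B.ncard := by
    rw [← Set.ncard_image_of_injective _ Subtype.val_injective]
    exact Set.ncard_le_ncard (Set.image_preimage_subset _ _)
  obtain ⟨U, hU, hUB⟩ := exists_finrank_add_one_eq_of_add_mem_insert_zero hadd (by omega)
  refine ⟨U.map W.subtype, ?_, ?_⟩
  · rw [Submodule.finrank_map_subtype_eq]
    omega
  · rintro _ ⟨x, hx, rfl⟩ hx0
    exact hUB x hx (by simpa using hx0)

theorem IsBlockingSet.exists_forall_mem_of_mul_ncard_lt (hB : IsBlockingSet (k + 1) B)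
    (hB0 : 0 ∉ B) (hcard : 2 ^ (k + 3) * (B.ncard + 1) < 11 * Nat.card V) :
    ∃ U : Submodule (ZMod 2) V, finrank (ZMod 2) U + k = finrank (ZMod 2) V ∧
      ∀ x ∈ U, x ≠ 0 → x ∈ B := by
  induction k generalizing V with
  | zero =>
    refine ⟨⊤, finrank_top _ _, fun x _ hx0 ↦ ?_⟩
    obtain ⟨y, hy, hyB⟩ := Set.not_disjoint_iff.1 <|
      hB (Submodule.span (ZMod 2) {x}) (finrank_span_singleton hx0)
    obtain rfl | rfl := mem_span_singleton_iff_eq_zero_or_eq.1 hy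
    exacts [(hB0 hyB).elim, hyB]
  | succ k ih =>
    rw [show 2 ^ (k + 1 + 3) = 2 ^ k * 16 from pow_add 2 k 4] at hcard
    obtain ⟨p, hp⟩ : (insert 0 B)ᶜ.Nonempty := by
      rw [← Set.ncard_pos]
      have hcompl := Set.ncard_add_ncard_compl (insert 0 B)
      have hinsert := Set.ncard_insert_le 0 B
      have hpow := Nat.one_le_two_pow (n := k)
      nlinarith
    obtain ⟨hp0, hpB⟩ : p ≠ 0 ∧ p ∉ B := by simpa using hp
    let P := Submodule.span (ZMod 2) {p}
    have hfinrank := P.finrank_quotient_add_finrank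
    rw [finrank_span_singleton hp0] at hfinrank
    have hcardV : Nat.card V = 2 * Nat.card (V ⧸ P) := by
      rw [natCard_eq_pow_finrank (K := ZMod 2), natCard_eq_pow_finrank (K := ZMod 2) (V := V ⧸ P),
        ← hfinrank, Nat.card_zmod, pow_succ']
    have : Finite (V ⧸ P) := Finite.of_surjective _ P.mkQ_surjective
    obtain ⟨W, hW, hWB⟩ := ih (V := V ⧸ P) (hB.image_mkQ_span_singleton hp0)
      (zero_notMem_image_mkQ_span_singleton hB0 hpB) <| by
        grw [Set.ncard_image_le, pow_add 2 k 3]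
        linarith
    have hcomap := finrank_comap_add_finrank P.mkQ_surjective W
    have hcodim : finrank (ZMod 2) (W.comap P.mkQ) + k = finrank (ZMod 2) V := by omega
    refine hB.exists_forall_mem_of_natCard_le hB0 hcodim (natCard_comap_mkQ_le_two_mul hWB) ?_
    rw [← natCard_mul_two_pow_of_finrank_add_eq hcodim] at hcard
    refine Nat.lt_of_mul_lt_mul_left (a := 2 ^ k) ?_
    linarith

end BlockingSet

section CriticalNumber

variable {V : Type*} [AddCommGroup V] [Module (ZMod 2) V] {M : Set V} {t : ℕ}

theorem isBlockingSet_compl_of_not_hasRestriction {X : Submodule (ZMod 2) V}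
    [Module.Finite (ZMod 2) X] (hfree : ¬ HasRestriction {x : Fin t → ZMod 2 | x ≠ 0} M) :
    IsBlockingSet t (insert 0 (Subtype.val ⁻¹' M) : Set X)ᶜ := by
  intro S hS hdisj
  let e : (Fin t → ZMod 2) ≃ₗ[ZMod 2] S := LinearEquiv.ofFinrankEq _ _ (by simp [hS])
  refine hfree ⟨X.subtype ∘ₗ S.subtype ∘ₗ e.toLinearMap, ?_, ?_⟩
  · exact X.injective_subtype.comp (S.injective_subtype.comp e.injective)
  · rintro _ ⟨x, hx, rfl⟩
    have hmem : (e x : X) ∈ insert 0 (Subtype.val ⁻¹' M : Set X) :=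
      not_not.1 (Set.disjoint_left.1 hdisj (e x).2)
    exact hmem.resolve_left (by simpa using hx)

theorem two_pow_mul_lt_eleven_mul_two_pow {r t m b : ℕ} (hmb : m + b = 2 ^ r)
    (hm : (2 : ℝ) ^ r * (1 - 2 ^ (1 - (t : ℤ)) - 3 * 2 ^ (-2 - (t : ℤ))) < m) :
    2 ^ (t + 2) * b < 11 * 2 ^ r := by
  have hb : (m : ℝ) = 2 ^ r - b := by
    rw [eq_sub_iff_add_eq]
    exact_mod_cast hmb
  have hdensity : (2 : ℝ) ^ (t + 2) *
      (1 - 2 ^ (1 - (t : ℤ)) - 3 * 2 ^ (-2 - (t : ℤ))) = 2 ^ (t + 2) - 11 := by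
    rw [zpow_sub₀ two_ne_zero, zpow_sub₀ two_ne_zero, zpow_natCast]
    field_simp
    ring
  have hlt := mul_lt_mul_of_pos_left hm (by positivity : (0 : ℝ) < 2 ^ (t + 2))
  rw [mul_left_comm, hdensity, hb] at hlt
  have : (2 : ℝ) ^ (t + 2) * b < 11 * 2 ^ r := by linarith
  exact_mod_cast this

theorem exists_linearMap_forall_mem_of_apply_eq_zero {K V : Type*} [Field K] [AddCommGroup V]
    [Module K V] {X : Submodule K V} [FiniteDimensional K X] {U : Submodule K X} {k : ℕ}
    (hU : finrank K U + k = finrank K X) :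
    ∃ φ : V →ₗ[K] (Fin k → K), ∀ x : X, φ x = 0 → x ∈ U := by
  let e : (X ⧸ U) ≃ₗ[K] (Fin k → K) := LinearEquiv.ofFinrankEq _ _ <| by
    have := U.finrank_quotient_add_finrank
    rw [finrank_fin_fun]
    omega
  obtain ⟨φ, hφ⟩ := (e.toLinearMap ∘ₗ U.mkQ).exists_extend
  refine ⟨φ, fun x hx ↦ ?_⟩
  have hex : e (U.mkQ x) = 0 := congr($hφ x).symm.trans hx
  simpa using hex

theorem govaerts_storme_general (hM : M.Finite) (hM0 : 0 ∉ M)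
    (hfree : ¬ HasRestriction {x : Fin t → ZMod 2 | x ≠ 0} M)
    (hsize : (2 : ℝ) ^ finrank (ZMod 2) (Submodule.span (ZMod 2) M) *
      (1 - 2 ^ (1 - (t : ℤ)) - 3 * 2 ^ (-2 - (t : ℤ))) < (M.ncard : ℝ)) :
    ∃ φ : V →ₗ[ZMod 2] (Fin (t - 1) → ZMod 2), ∀ x ∈ M, φ x ≠ 0 := by
  have := Module.Finite.span_of_finite (ZMod 2) hM
  have := Module.finite_of_finite (ZMod 2) (M := Submodule.span (ZMod 2) M)
  obtain _ | k := t
  · refine (hfree ⟨0, Function.injective_of_subsingleton _, ?_⟩).elim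
    rintro _ ⟨x, hx, _⟩
    exact (hx (Subsingleton.elim x 0)).elim
  let M' : Set (Submodule.span (ZMod 2) M) := Subtype.val ⁻¹' M
  have hM' : M'.ncard = M.ncard :=
    Set.ncard_preimage_of_injective_subset_range Subtype.val_injective (by simp)
  have hM'0 : 0 ∉ M' := hM0
  have hcompl := Set.ncard_add_ncard_compl (insert 0 M')
  rw [Set.ncard_insert_of_notMem hM'0, hM', natCard_eq_pow_finrank (K := ZMod 2),
    Nat.card_zmod] at hcompl
  have hB : IsBlockingSet (k + 1) (insert 0 M')ᶜ := isBlockingSet_compl_of_not_hasRestriction hfree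
  obtain ⟨U, hU, hUM⟩ := hB.exists_forall_mem_of_mul_ncard_lt (by simp) <| by
    rw [natCard_eq_pow_finrank (K := ZMod 2) (V := Submodule.span (ZMod 2) M), Nat.card_zmod]
    exact two_pow_mul_lt_eleven_mul_two_pow (by rw [← hcompl, add_assoc, add_comm 1]) hsize
  obtain ⟨φ, hφ⟩ := exists_linearMap_forall_mem_of_apply_eq_zero hU
  refine ⟨φ, fun x hx hφx ↦ hUM ⟨x, Submodule.subset_span hx⟩ (hφ _ hφx) ?_ (.inr hx)⟩
  rintro ⟨⟩
  exact hM0 hx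

end CriticalNumber

/-- Govaerts–Storme: a matroidal analogue of the Andrásfai–Erdős–Sós theorem. -/
theorem govaerts_storme (t r n : ℕ) (ht : 2 ≤ t) (hr : t + 2 ≤ r)
    (M : Set (Fin n → ZMod 2)) (hM0 : 0 ∉ M) (hrank : rankM M = r)
    (hfree : ¬ HasRestriction {x : Fin t → ZMod 2 | x ≠ 0} M)
    (hsize : (2 : ℝ) ^ r * (1 - 2 ^ (1 - (t : ℤ)) - 3 * 2 ^ (-2 - (t : ℤ))) < (M.ncard : ℝ)) :
    critNum M ≤ t - 1 :=
  Nat.sInf_le <| govaerts_storme_general M.toFinite hM0 hfree (by rwa [← hrank] at hsize)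
end
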